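/- Let p be a prime and G a finite non-abelian p-group of order p^n whose derived subgroup G' has order at least p^3. Then the Schur multiplier of G does not have order p^{(n-1)(n-2)/2 - 1} (i.e. G does not satisfy s(G) = 2). -/

import Mathlib

/-- The kernel of the canonical free presentation `FreeGroup G → G`. -/
def presentationKernel (G : Type u) [Group G] : Subgroup (FreeGroup G) :=
  (FreeGroup.lift (id : G → G)).ker

/-- The Schur multiplier `M(G) = H₂(G, ℤ)` (second integral group homology) of a
group `G`, realised via Hopf's integral formula `H₂(G, ℤ) ≅ (R ⊓ [F, F]) / [F, R]`,
where `F = FreeGroup G` is the canonical free group surjecting onto `G` with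
kernel `R`. -/
def SchurMultiplier (G : Type u) [Group G] : Type u :=
  ↥(presentationKernel G ⊓ commutator (FreeGroup G)) ⧸
    (⁅(⊤ : Subgroup (FreeGroup G)), presentationKernel G⁆.subgroupOf
      (presentationKernel G ⊓ commutator (FreeGroup G)))

/-- A finite `p`-group `H` is extraspecial if its center, derived subgroup and
Frattini subgroup coincide and have order `p`. -/
def IsExtraspecial (p : ℕ) (H : Type*) [Group H] : Prop :=
  Subgroup.center H = commutator H ∧ Subgroup.center H = frattini H ∧
    Nat.card (Subgroup.center H) = p

/-!
Let `F` be the free group on `G` and `R` the kernel of `F → G`, so that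
`|M(G)| |G'| = [F' : [F, R]]`. If `x ∈ F` is central modulo `R`, then adjoining `x` to `R`
enlarges `[F, R]` by the index in `F` of the centralizer of `x` modulo `[F, R]`, and this
centralizer contains `R`, `x` and `F'`. Write `|G'| = p ^ (k + 1)` and `|G : G'| = p ^ m`.
Adjoining elements of `F'` one at a time takes `R` up to `R F'` in `k + 1` steps. Each of the
first `k` contributes at most `[F : R F'] = p ^ m`. The last contributes at most `p ^ 2`: the
element adjoined can be taken to be a commutator `⁅a, b⁆`, and whatever commutes with `a` and `b`
modulo `R` commutes with `⁅a, b⁆` modulo `[F, R]`. Going on from `R F'` to `F` contributes at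
most `p ^ (m (m - 1) / 2)`, as in Wiegold's bound. The resulting bound on `|M(G)| |G'|` is too
small for `s(G) = 2` once `k ≥ 2`.
-/

open Subgroup
open scoped commutatorElement

section RelIndex

variable {G : Type*} [Group G]

lemma relIndex_ker_commutator {H : Type*} [Group H] {f : G →* H} (hf : Function.Surjective f) :
    f.ker.relIndex (commutator G) = Nat.card (commutator H) := by
  rw [relIndex_ker, map_commutator_eq, MonoidHom.range_eq_top.2 hf, _root_.commutator_def]

lemma sup_zpowers_eq_sup_of_prime_relIndex {R K : Subgroup G} [R.Normal]
    (hp : (R.relIndex K).Prime) {x : G} (hxK : x ∈ K) (hxR : x ∉ R) :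
    R ⊔ zpowers x = R ⊔ K := by
  have hle : R ⊔ zpowers x ≤ R ⊔ K := sup_le_sup_left (zpowers_le.2 hxK) R
  have hmul := relIndex_mul_relIndex R _ _ le_sup_left hle
  rw [relIndex_sup_left K] at hmul
  have hne : R.relIndex (R ⊔ zpowers x) ≠ 1 := fun h =>
    hxR (relIndex_eq_one.1 h (mem_sup_right (mem_zpowers x)))
  rw [← hmul, Nat.prime_mul_iff] at hp
  exact hle.antisymm (relIndex_eq_one.1 (hp.resolve_right fun h => hne h.2).2)

lemma relIndex_commutator_top_mul_relIndex {R S H : Subgroup G} (hRS : R ≤ S)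
    (hSH : ⁅(⊤ : Subgroup G), S⁆ ≤ H) :
    ⁅(⊤ : Subgroup G), R⁆.relIndex ⁅(⊤ : Subgroup G), S⁆ * ⁅(⊤ : Subgroup G), S⁆.relIndex H =
      ⁅(⊤ : Subgroup G), R⁆.relIndex H :=
  relIndex_mul_relIndex _ _ _ (commutator_mono le_rfl hRS) hSH

end RelIndex

section CentralCommutators

variable {G : Type*} [Group G]

/-- The homomorphism `e ↦ ⁅x, e⁆` attached to an element `x` all of whose commutators are central.
Its kernel is the centralizer of `x`, so it computes the index of that centralizer. -/
def commutatorHom (x : G) (hx : ∀ e, ⁅x, e⁆ ∈ center G) : G →* center G where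
  toFun e := ⟨⁅x, e⁆, hx e⟩
  map_one' := Subtype.ext (commutatorElement_one_right x)
  map_mul' c d := Subtype.ext <| by
    change ⁅x, c * d⁆ = ⁅x, c⁆ * ⁅x, d⁆
    rw [commutatorElement_mul_right_eq_mul_conj, mul_assoc _ c, mem_center_iff.1 (hx d) c]
    group

lemma ker_commutatorHom (x : G) (hx : ∀ e, ⁅x, e⁆ ∈ center G) :
    (commutatorHom x hx).ker = centralizer {x} := by
  ext e
  rw [MonoidHom.mem_ker, mem_centralizer_singleton_iff, eq_comm (a := e * x),
    ← commutatorElement_eq_one_iff_mul_comm]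
  exact Subtype.ext_iff

lemma commutator_le_centralizer_singleton {x : G} (hx : ∀ e, ⁅x, e⁆ ∈ center G) :
    commutator G ≤ centralizer {x} := by
  rw [_root_.commutator_def, commutator_le, ← ker_commutatorHom x hx]
  intro a _ b _
  rw [MonoidHom.mem_ker, map_commutatorElement, commutatorElement_eq_one_iff_mul_comm]
  exact Subtype.ext (mem_center_iff.1 (hx b) _)

lemma normal_of_le_center {Z : Subgroup G} (hZ : Z ≤ center G) : Z.Normal :=
  ⟨fun z hz g => by rwa [mem_center_iff.1 (hZ hz) g, mul_inv_cancel_right]⟩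

lemma commutator_top_le_iff_map_mk'_le_center {H N : Subgroup G} [N.Normal] :
    ⁅(⊤ : Subgroup G), H⁆ ≤ N ↔ H.map (QuotientGroup.mk' N) ≤ center (G ⧸ N) := by
  rw [← commutator_top_left_eq_bot_iff_le_center,
    ← map_top_of_surjective _ (QuotientGroup.mk'_surjective N), ← map_commutator,
    Subgroup.map_eq_bot_iff, QuotientGroup.ker_mk']

lemma mk_mem_center_iff_forall_commutatorElement_mem {N : Subgroup G} [N.Normal] {x : G} :
    (x : G ⧸ N) ∈ center (G ⧸ N) ↔ ∀ e, ⁅x, e⁆ ∈ N := by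
  rw [mem_center_iff, QuotientGroup.mk_surjective.forall]
  refine forall_congr' fun e => ?_
  rw [eq_comm, ← commutatorElement_eq_one_iff_mul_comm, ← QuotientGroup.eq_one_iff]
  exact Iff.rfl

lemma commutator_top_sup_zpowers_le {N H : Subgroup G} [N.Normal] {x : G}
    (hH : ⁅(⊤ : Subgroup G), H⁆ ≤ N) (hx : ∀ e, ⁅x, e⁆ ∈ N) :
    ⁅(⊤ : Subgroup G), H ⊔ zpowers x⁆ ≤ N := by
  rw [commutator_top_le_iff_map_mk'_le_center, Subgroup.map_sup, MonoidHom.map_zpowers, sup_le_iff,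
    zpowers_le]
  exact ⟨commutator_top_le_iff_map_mk'_le_center.1 hH,
    mk_mem_center_iff_forall_commutatorElement_mem.2 hx⟩

lemma normal_sup_zpowers {R : Subgroup G} [R.Normal] {x : G} (hx : ∀ e, ⁅x, e⁆ ∈ R) :
    (R ⊔ zpowers x).Normal :=
  commutator_top_left_le_iff.1
    ((commutator_top_sup_zpowers_le (commutator_le_right _ _) hx).trans le_sup_left)

lemma commutator_top_sup_zpowers_eq_map_range {Z : Subgroup G} (hZ : Z ≤ center G) (x : G)
    (hx : ∀ e, ⁅x, e⁆ ∈ center G) :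
    ⁅(⊤ : Subgroup G), Z ⊔ zpowers x⁆ = (commutatorHom x hx).range.map (center G).subtype := by
  have : ((commutatorHom x hx).range.map (center G).subtype).Normal :=
    normal_of_le_center (map_subtype_le _)
  apply le_antisymm
  · refine commutator_top_sup_zpowers_le ?_ fun e => ⟨_, ⟨e, rfl⟩, rfl⟩
    rw [commutator_top_left_eq_bot_iff_le_center.2 hZ]
    exact bot_le
  · rintro _ ⟨_, ⟨e, rfl⟩, rfl⟩
    rw [commutator_comm]
    exact commutator_mem_commutator (mem_sup_right (mem_zpowers x)) (mem_top e)

lemma card_commutator_top_sup_zpowers {Z : Subgroup G} (hZ : Z ≤ center G) {x : G}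
    (hx : ∀ e, ⁅x, e⁆ ∈ center G) :
    Nat.card (⁅(⊤ : Subgroup G), Z ⊔ zpowers x⁆ : Subgroup G) = (centralizer {x}).index := by
  rw [commutator_top_sup_zpowers_eq_map_range hZ x hx,
    card_map_of_injective (subtype_injective _), ← index_ker, ker_commutatorHom]

lemma index_centralizer_singleton_dvd_card_commutator {x : G} (hx : ∀ e, ⁅x, e⁆ ∈ center G) :
    (centralizer {x}).index ∣ Nat.card (commutator G) := by
  rw [← card_commutator_top_sup_zpowers bot_le hx]
  exact card_dvd_of_le (commutator_mono le_rfl le_top)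

lemma commutatorElement_mul_mul_of_mem_center {z w : G} (hz : z ∈ center G) (hw : w ∈ center G)
    (a b : G) : ⁅z * a, w * b⁆ = ⁅a, b⁆ := by
  have hz' (g : G) : ⁅z, g⁆ = 1 :=
    commutatorElement_eq_one_iff_mul_comm.2 (mem_center_iff.1 hz g).symm
  have hw' (g : G) : ⁅g, w⁆ = 1 :=
    commutatorElement_eq_one_iff_mul_comm.2 (mem_center_iff.1 hw g)
  rw [commutatorElement_mul_left_eq_conj_mul, commutatorElement_mul_right_eq_mul_conj, hz', hw',
    one_mul, mul_one, ← mem_center_iff.1 hw, mul_inv_cancel_right, ← mem_center_iff.1 hz,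
    mul_inv_cancel_right]

lemma commute_commutatorElement_of_mem_center {a b e : G} (ha : ⁅e, a⁆ ∈ center G)
    (hb : ⁅e, b⁆ ∈ center G) : Commute ⁅a, b⁆ e := by
  have conj_eq (g : G) : e * g * e⁻¹ = ⁅e, g⁆ * g := conj_eq_commutatorElement_mul
  refine Commute.symm (mul_inv_eq_iff_eq_mul.1 ?_)
  rw [conjugate_commutatorElement, conj_eq, conj_eq, commutatorElement_mul_mul_of_mem_center ha hb]

end CentralCommutators

section CentralizerMod

variable {G : Type*} [Group G]

/-- The centralizer of `x` modulo `N`: the preimage in `G` of the centralizer of `xN` in `G ⧸ N`.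
Its index for `N = [G, R]` measures how `[G, R]` grows when `x` is adjoined to `R`. -/
def centralizerMod (N : Subgroup G) [N.Normal] (x : G) : Subgroup G :=
  (centralizer {(x : G ⧸ N)}).comap (QuotientGroup.mk' N)

lemma mem_centralizerMod_iff {N : Subgroup G} [N.Normal] {x e : G} :
    e ∈ centralizerMod N x ↔ ⁅x, e⁆ ∈ N := by
  rw [centralizerMod, mem_comap, mem_centralizer_singleton_iff, eq_comm,
    QuotientGroup.mk'_apply, ← commutatorElement_eq_one_iff_mul_comm, ← QuotientGroup.eq_one_iff]
  exact Iff.rfl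

lemma index_centralizerMod (N : Subgroup G) [N.Normal] (x : G) :
    (centralizerMod N x).index = (centralizer {(x : G ⧸ N)}).index :=
  index_comap_of_surjective _ (QuotientGroup.mk'_surjective N)

lemma mk_mem_center_quotient_commutator_top {R : Subgroup G} [R.Normal] {r : G} (hr : r ∈ R) :
    (r : G ⧸ ⁅(⊤ : Subgroup G), R⁆) ∈ center (G ⧸ ⁅(⊤ : Subgroup G), R⁆) :=
  commutator_top_le_iff_map_mk'_le_center.1 le_rfl (mem_map_of_mem _ hr)

variable {R : Subgroup G} [R.Normal]

lemma commutatorElement_mk_mem_center {x : G} (hx : ∀ e, ⁅x, e⁆ ∈ R)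
    (e : G ⧸ ⁅(⊤ : Subgroup G), R⁆) :
    ⁅(x : G ⧸ ⁅(⊤ : Subgroup G), R⁆), e⁆ ∈ center (G ⧸ ⁅(⊤ : Subgroup G), R⁆) := by
  obtain ⟨e, rfl⟩ := QuotientGroup.mk_surjective e
  exact mk_mem_center_quotient_commutator_top (hx e)

lemma index_centralizerMod_dvd_relIndex_commutator {x : G}
    (hx : ∀ e, ⁅(x : G ⧸ R), e⁆ ∈ center (G ⧸ R)) :
    (centralizerMod R x).index ∣ R.relIndex (commutator G) := by
  have hcomm : R.relIndex (commutator G) = Nat.card (commutator (G ⧸ R)) := by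
    rw [← relIndex_ker_commutator (QuotientGroup.mk'_surjective R), QuotientGroup.ker_mk']
  rw [index_centralizerMod, hcomm]
  exact index_centralizer_singleton_dvd_card_commutator hx

lemma normal_centralizerMod {x : G} (hx : ∀ e, ⁅(x : G ⧸ R), e⁆ ∈ center (G ⧸ R)) :
    (centralizerMod R x).Normal := by
  rw [centralizerMod, ← ker_commutatorHom _ hx]
  infer_instance

lemma relIndex_commutator_top_sup_zpowers {x : G} (hx : ∀ e, ⁅x, e⁆ ∈ R) :
    ⁅(⊤ : Subgroup G), R⁆.relIndex ⁅(⊤ : Subgroup G), R ⊔ zpowers x⁆ =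
      (centralizerMod ⁅(⊤ : Subgroup G), R⁆ x).index := by
  let π := QuotientGroup.mk' ⁅(⊤ : Subgroup G), R⁆
  have hπ : map π ⊤ = ⊤ := map_top_of_surjective π (QuotientGroup.mk'_surjective _)
  calc ⁅(⊤ : Subgroup G), R⁆.relIndex ⁅(⊤ : Subgroup G), R ⊔ zpowers x⁆
      = Nat.card (map π ⁅(⊤ : Subgroup G), R ⊔ zpowers x⁆) := by
        rw [← relIndex_ker, QuotientGroup.ker_mk']
    _ = Nat.card (⁅⊤, map π R ⊔ zpowers (π x)⁆ : Subgroup (G ⧸ ⁅(⊤ : Subgroup G), R⁆)) := by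
        rw [map_commutator, hπ, Subgroup.map_sup, MonoidHom.map_zpowers]
    _ = (centralizer {π x}).index :=
        card_commutator_top_sup_zpowers (commutator_top_le_iff_map_mk'_le_center.1 le_rfl)
          (commutatorElement_mk_mem_center hx)
    _ = (centralizerMod ⁅(⊤ : Subgroup G), R⁆ x).index := (index_centralizerMod _ x).symm

lemma sup_zpowers_le_centralizerMod (x : G) :
    R ⊔ zpowers x ≤ centralizerMod ⁅(⊤ : Subgroup G), R⁆ x := by
  rw [sup_le_iff, zpowers_le, mem_centralizerMod_iff, commutatorElement_self]
  exact ⟨fun r hr => mem_centralizerMod_iff.2 (commutator_mem_commutator (mem_top x) hr),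
    one_mem _⟩

lemma commutator_le_centralizerMod {x : G} (hx : ∀ e, ⁅x, e⁆ ∈ R) :
    commutator G ≤ centralizerMod ⁅(⊤ : Subgroup G), R⁆ x := by
  refine map_le_iff_le_comap.1 (le_trans ?_
    (commutator_le_centralizer_singleton (commutatorElement_mk_mem_center hx)))
  rw [map_commutator_eq]
  exact commutator_mono le_top le_top

lemma centralizerMod_inf_le_centralizerMod_commutatorElement (a b : G) :
    centralizerMod R a ⊓ centralizerMod R b ≤ centralizerMod ⁅(⊤ : Subgroup G), R⁆ ⁅a, b⁆ := by
  rintro e ⟨ha, hb⟩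
  have mem_center {g : G} (hg : e ∈ centralizerMod R g) :
      ⁅(e : G ⧸ ⁅(⊤ : Subgroup G), R⁆), (g : G ⧸ ⁅(⊤ : Subgroup G), R⁆)⁆ ∈ center _ :=
    mk_mem_center_quotient_commutator_top (r := ⁅e, g⁆)
      (commutatorElement_inv g e ▸ inv_mem (mem_centralizerMod_iff.1 hg))
  rw [mem_centralizerMod_iff, ← QuotientGroup.eq_one_iff]
  exact commutatorElement_eq_one_iff_commute.2
    (commute_commutatorElement_of_mem_center (mem_center ha) (mem_center hb))

end CentralizerMod

section PGroup

variable {G : Type*} [Group G] {p : ℕ} [Fact p.Prime]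

lemma inf_center_ne_bot_of_isPGroup [Finite G] (hG : IsPGroup p G) {N : Subgroup G} [N.Normal]
    (hN : N ≠ ⊥) : N ⊓ center G ≠ ⊥ := by
  have : Nontrivial N := N.nontrivial_iff_ne_bot.2 hN
  have hdvd : p ∣ Nat.card N :=
    (hG.to_subgroup N).card_eq_or_dvd.resolve_left Finite.one_lt_card.ne'
  obtain ⟨z, hz, hz1⟩ :=
    (hG.of_equiv ConjAct.toConjAct).exists_fixed_point_of_prime_dvd_card_of_fixed_point N hdvd
      (a := 1) fun g => smul_one g
  have hzc : (z : G) ∈ center G := mem_center_iff.2 fun g =>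
    mul_inv_eq_iff_eq_mul.1 (congrArg Subtype.val (hz (ConjAct.toConjAct g)))
  intro h
  have hzbot : (z : G) ∈ N ⊓ center G := ⟨z.2, hzc⟩
  rw [h, mem_bot] at hzbot
  exact hz1 (Subtype.ext hzbot.symm)

lemma exists_mem_center_orderOf_eq_of_isPGroup [Finite G] (hG : IsPGroup p G) {N : Subgroup G}
    [N.Normal] (hN : N ≠ ⊥) : ∃ x ∈ N, x ∈ center G ∧ orderOf x = p := by
  have : Nontrivial ↥(N ⊓ center G) :=
    (nontrivial_iff_ne_bot _).2 (inf_center_ne_bot_of_isPGroup hG hN)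
  obtain ⟨x, hx⟩ := exists_prime_orderOf_dvd_card' (G := ↥(N ⊓ center G)) p
    ((hG.to_subgroup _).card_eq_or_dvd.resolve_left Finite.one_lt_card.ne')
  exact ⟨x, x.2.1, x.2.2, by rw [orderOf_coe, hx]⟩

variable {R : Subgroup G} [R.Normal]

lemma exists_mem_index_sup_zpowers_eq {n : ℕ} (hR : R.index = p ^ (n + 1)) {A : Subgroup G}
    [A.Normal] (hA : ¬ A ≤ R) :
    ∃ x ∈ A, (∀ e, ⁅x, e⁆ ∈ R) ∧ (R ⊔ zpowers x).index = p ^ n := by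
  have hp : p.Prime := Fact.out
  let π := QuotientGroup.mk' R
  have hcard : Nat.card (G ⧸ R) = p ^ (n + 1) := hR
  have : Finite (G ⧸ R) :=
    Nat.finite_of_card_ne_zero (hcard ▸ pow_ne_zero _ hp.ne_zero)
  have : (A.map π).Normal := Normal.map ‹_› π (QuotientGroup.mk'_surjective R)
  have hAbot : A.map π ≠ ⊥ := by rwa [Ne, Subgroup.map_eq_bot_iff, QuotientGroup.ker_mk']
  obtain ⟨_, ⟨x, hxA, rfl⟩, hxc, hxp⟩ :=
    exists_mem_center_orderOf_eq_of_isPGroup (IsPGroup.of_card hcard) hAbot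
  refine ⟨x, hxA, mk_mem_center_iff_forall_commutatorElement_mem.1 hxc, ?_⟩
  have hrel : R.relIndex (R ⊔ zpowers x) = p := by
    rw [relIndex_sup_left, ← QuotientGroup.ker_mk' R, relIndex_ker, MonoidHom.map_zpowers,
      Nat.card_zpowers, hxp]
  have hmul := relIndex_mul_index (le_sup_left : R ≤ R ⊔ zpowers x)
  rw [hrel, hR, pow_succ'] at hmul
  exact Nat.eq_of_mul_eq_mul_left hp.pos hmul

lemma commutator_top_le_of_relIndex_eq_prime {n : ℕ} (hR : R.index = p ^ (n + 1)) {A : Subgroup G}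
    [A.Normal] (hA : R.relIndex A = p) : ⁅(⊤ : Subgroup G), A⁆ ≤ R := by
  have hp : p.Prime := Fact.out
  have hAR : ¬ A ≤ R := fun h => hp.ne_one (hA.symm.trans (relIndex_eq_one.2 h))
  obtain ⟨x, hxA, hx, hS⟩ := exists_mem_index_sup_zpowers_eq hR hAR
  have hxR : x ∉ R := fun h => by
    rw [sup_eq_left.2 (zpowers_le.2 h), hR, Nat.pow_right_inj hp.one_lt] at hS
    omega
  have hsup : R ⊔ zpowers x = R ⊔ A := sup_zpowers_eq_sup_of_prime_relIndex (hA ▸ hp) hxA hxR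
  calc ⁅(⊤ : Subgroup G), A⁆ ≤ ⁅⊤, R ⊔ zpowers x⁆ := commutator_mono le_rfl (hsup ▸ le_sup_right)
    _ ≤ R := commutator_top_sup_zpowers_le (commutator_le_right ⊤ R) hx

end PGroup

section CommutatorIndexBounds

variable {G : Type*} [Group G]

lemma relIndex_commutator_top_sup_commutator_dvd_sq {R : Subgroup G} [R.Normal]
    (hp : (R.relIndex (commutator G)).Prime)
    (hR : ⁅(⊤ : Subgroup G), commutator G⁆ ≤ R) :
    ⁅(⊤ : Subgroup G), R⁆.relIndex ⁅(⊤ : Subgroup G), R ⊔ commutator G⁆ ∣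
      R.relIndex (commutator G) ^ 2 := by
  obtain ⟨a, b, hab⟩ : ∃ a b : G, ⁅a, b⁆ ∉ R := by
    by_contra! h
    exact hp.ne_one (relIndex_eq_one.2 (commutator_le.2 fun a _ b _ => h a b))
  have hcomm (g h : G) : ⁅g, h⁆ ∈ commutator G := commutator_mem_commutator (mem_top g) (mem_top h)
  have hsup : R ⊔ zpowers ⁅a, b⁆ = R ⊔ commutator G :=
    sup_zpowers_eq_sup_of_prime_relIndex hp (hcomm a b) hab
  have hcenter (g : G) (e : G ⧸ R) : ⁅(g : G ⧸ R), e⁆ ∈ center (G ⧸ R) := by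
    obtain ⟨e, rfl⟩ := QuotientGroup.mk_surjective e
    exact commutator_top_le_iff_map_mk'_le_center.1 hR (mem_map_of_mem _ (hcomm g e))
  have := normal_centralizerMod (hcenter a)
  have hx (e : G) : ⁅⁅a, b⁆, e⁆ ∈ R :=
    mk_mem_center_iff_forall_commutatorElement_mem.1 (hcenter a b) e
  rw [← hsup, relIndex_commutator_top_sup_zpowers hx, sq]
  refine (index_dvd_of_le (centralizerMod_inf_le_centralizerMod_commutatorElement a b)).trans ?_
  rw [← relIndex_top_right, ← relIndex_inf_mul_relIndex, relIndex_top_right, inf_top_eq]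
  exact mul_dvd_mul
    ((relIndex_dvd_index_of_normal _ _).trans
      (index_centralizerMod_dvd_relIndex_commutator (hcenter a)))
    (index_centralizerMod_dvd_relIndex_commutator (hcenter b))

variable {p : ℕ} [Fact p.Prime]

theorem relIndex_commutator_top_commutator_dvd (n : ℕ) (R : Subgroup G) [R.Normal]
    (hR : R.index = p ^ n) :
    ⁅(⊤ : Subgroup G), R⁆.relIndex (commutator G) ∣ p ^ n.choose 2 := by
  induction n generalizing R with
  | zero => simp [index_eq_one.1 hR, ← _root_.commutator_def]
  | succ n ih =>
    have hRtop : ¬ ⊤ ≤ R := fun h => by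
      rw [top_le_iff.1 h, index_top] at hR
      exact (Nat.one_lt_pow n.succ_ne_zero (Fact.out : p.Prime).one_lt).ne hR
    obtain ⟨x, -, hx, hS⟩ := exists_mem_index_sup_zpowers_eq hR hRtop
    have : (R ⊔ zpowers x).Normal := normal_sup_zpowers hx
    have hSG : ⁅⊤, R ⊔ zpowers x⁆ ≤ commutator G := commutator_mono le_rfl le_top
    rw [← relIndex_commutator_top_mul_relIndex le_sup_left hSG, Nat.choose_succ_succ',
      Nat.choose_one_right, pow_add]
    refine mul_dvd_mul ?_ (ih _ hS)
    rw [relIndex_commutator_top_sup_zpowers hx, ← hS]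
    exact index_dvd_of_le (sup_zpowers_le_centralizerMod x)

theorem relIndex_commutator_top_sup_commutator_dvd {m : ℕ} (k : ℕ) (R : Subgroup G) [R.Normal]
    (hR : R.index = p ^ (m + k + 1)) (hRG : (R ⊔ commutator G).index = p ^ m) :
    ⁅(⊤ : Subgroup G), R⁆.relIndex ⁅(⊤ : Subgroup G), R ⊔ commutator G⁆ ∣ p ^ (k * m + 2) := by
  have hp : p.Prime := Fact.out
  induction k generalizing R with
  | zero =>
    have hrel : R.relIndex (commutator G) = p := by
      have hmul := relIndex_mul_index (le_sup_left : R ≤ R ⊔ commutator G)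
      rw [relIndex_sup_left, hR, hRG, add_zero, pow_succ'] at hmul
      exact Nat.eq_of_mul_eq_mul_right (pow_pos hp.pos m) hmul
    simpa [hrel] using relIndex_commutator_top_sup_commutator_dvd_sq (hrel ▸ hp)
      (commutator_top_le_of_relIndex_eq_prime hR hrel)
  | succ k ih =>
    have hGR : ¬ commutator G ≤ R := fun hle => by
      rw [sup_eq_left.2 hle, hR, Nat.pow_right_inj hp.one_lt] at hRG
      omega
    obtain ⟨x, hxG, hx, hS⟩ := exists_mem_index_sup_zpowers_eq hR hGR
    have : (R ⊔ zpowers x).Normal := normal_sup_zpowers hx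
    have hsup : R ⊔ zpowers x ⊔ commutator G = R ⊔ commutator G := by
      rw [sup_assoc, sup_eq_right.2 (zpowers_le.2 hxG)]
    have hle : ⁅⊤, R ⊔ zpowers x⁆ ≤ ⁅⊤, R ⊔ commutator G⁆ :=
      commutator_mono le_rfl (hsup ▸ le_sup_left)
    have hexp : (k + 1) * m + 2 = m + (k * m + 2) := by ring
    rw [← relIndex_commutator_top_mul_relIndex le_sup_left hle, hexp, pow_add]
    refine mul_dvd_mul ?_ (hsup ▸ ih _ hS (hsup ▸ hRG))
    rw [relIndex_commutator_top_sup_zpowers hx, ← hRG]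
    exact index_dvd_of_le (sup_le (le_sup_left.trans (sup_zpowers_le_centralizerMod x))
      (commutator_le_centralizerMod hx))

end CommutatorIndexBounds

section SchurMultiplier

variable (G : Type*) [Group G]

instance presentationKernel_normal : (presentationKernel G).Normal :=
  MonoidHom.normal_ker _

lemma index_presentationKernel : (presentationKernel G).index = Nat.card G := by
  rw [presentationKernel, index_ker,
    MonoidHom.range_eq_top.2 (FreeGroup.lift_surjective_of_surjective Function.surjective_id),
    card_top]

lemma relIndex_presentationKernel_commutator :
    (presentationKernel G).relIndex (commutator (FreeGroup G)) = Nat.card (commutator G) :=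
  relIndex_ker_commutator (FreeGroup.lift_surjective_of_surjective Function.surjective_id)

lemma card_schurMultiplier_mul_card_commutator :
    Nat.card (SchurMultiplier G) * Nat.card (commutator G) =
      ⁅(⊤ : Subgroup (FreeGroup G)), presentationKernel G⁆.relIndex (commutator (FreeGroup G)) := by
  have hle : ⁅⊤, presentationKernel G⁆ ≤ presentationKernel G ⊓ commutator (FreeGroup G) :=
    le_inf (commutator_le_right _ _) (commutator_mono le_rfl le_top)
  rw [← relIndex_presentationKernel_commutator, ← relIndex_mul_relIndex _ _ _ hle inf_le_right,
    inf_relIndex_right]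
  rfl

variable {G}

theorem card_schurMultiplier_mul_card_commutator_dvd {p : ℕ} [Fact p.Prime] {m k : ℕ}
    (hG : Nat.card G = p ^ (m + k + 1)) (hG' : Nat.card (commutator G) = p ^ (k + 1)) :
    Nat.card (SchurMultiplier G) * Nat.card (commutator G) ∣ p ^ (k * m + 2 + m.choose 2) := by
  let R := presentationKernel G
  have hR : R.index = p ^ (m + k + 1) := (index_presentationKernel G).trans hG
  have hRF : (R ⊔ commutator (FreeGroup G)).index = p ^ m := by
    have hmul := relIndex_mul_index (le_sup_left : R ≤ R ⊔ commutator (FreeGroup G))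
    rw [relIndex_sup_left, relIndex_presentationKernel_commutator, hG', hR, add_assoc,
      add_comm m, pow_add p (k + 1)] at hmul
    exact Nat.eq_of_mul_eq_mul_left (pow_pos (Fact.out : p.Prime).pos (k + 1)) hmul
  have hle : ⁅⊤, R ⊔ commutator (FreeGroup G)⁆ ≤ commutator (FreeGroup G) :=
    commutator_mono le_rfl le_top
  rw [card_schurMultiplier_mul_card_commutator, pow_add,
    ← relIndex_commutator_top_mul_relIndex le_sup_left hle]
  exact mul_dvd_mul (relIndex_commutator_top_sup_commutator_dvd k R hR hRF)
    (relIndex_commutator_top_commutator_dvd m _ hRF)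

end SchurMultiplier

lemma lt_choose_two_add (m : ℕ) {k : ℕ} (hk : 2 ≤ k) :
    k * m + 2 + m.choose 2 < (m + k).choose 2 - 1 + (k + 1) := by
  have hk2 : 1 ≤ k.choose 2 := Nat.choose_pos hk
  have hadd : (m + k).choose 2 = m.choose 2 + m * k + k.choose 2 := by
    simp [Nat.add_choose_eq, Finset.Nat.antidiagonal_succ, add_comm]
  rw [hadd, mul_comm k m]
  omega

/-- **Lemma 1.** There is no `p`-group with `|G'| ≥ p^3` and `s(G) = 2`: if `G` is a
finite non-abelian `p`-group of order `p^n` whose derived subgroup has order at least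
`p^3`, then its Schur multiplier does not have order `p^((n-1)(n-2)/2 - 1)`. -/
theorem no_s_eq_two_of_card_commutator_ge {p n : ℕ} (hp : p.Prime)
    {G : Type*} [Group G] (hG : Nat.card G = p ^ n)
    (hnab : ∃ a b : G, a * b ≠ b * a)
    (hG' : p ^ 3 ≤ Nat.card (commutator G)) :
    Nat.card (SchurMultiplier G) ≠ p ^ ((n - 1) * (n - 2) / 2 - 1) := by
  intro hM
  have : Fact p.Prime := ⟨hp⟩
  obtain ⟨l, hln, hl⟩ := (Nat.dvd_prime_pow hp).1 (hG ▸ card_subgroup_dvd_card (commutator G))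
  have hl3 : 3 ≤ l := (Nat.pow_le_pow_iff_right hp.one_lt).1 (hl ▸ hG')
  obtain ⟨k, rfl⟩ := Nat.exists_eq_add_of_le' (Nat.one_le_of_lt hl3)
  obtain ⟨m, rfl⟩ := Nat.exists_eq_add_of_le' hln
  have hdvd := card_schurMultiplier_mul_card_commutator_dvd hG hl
  have hchoose : (m + (k + 1) - 1) * (m + (k + 1) - 2) / 2 = (m + k).choose 2 := by
    rw [Nat.choose_two_right]; rfl
  rw [hM, hchoose, hl, ← pow_add, Nat.pow_dvd_pow_iff_le_right hp.one_lt] at hdvd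
  exact (lt_choose_two_add m (Nat.le_of_succ_le_succ hl3)).not_ge hdvd
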